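/- Let G be a connected simple graph on Fin N and suppose G has a closed walk p that is Eulerian (uses every edge of G exactly once) and satisfies: for all indices i, j ≤ length of p, if the i-th vertex of p equals the j-th vertex of p then 4 divides i − j. Define θ : Fin N → ℝ by θ(v) = i·π/2 whenever v is the i-th vertex of p (this is well defined modulo 2π by the divisibility hypothesis). Then θ is a completely degenerate equilibrium of the identical Kuramoto system on G. -/

import Mathlib

open Real

open Classical in
/-- Adjacency indicator: `1` if `j` and `k` are adjacent in `G`, `0` otherwise. -/
noncomputable def adjInd {V : Type*} (G : SimpleGraph V) (j k : V) : ℝ :=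
  if G.Adj j k then 1 else 0

/-- A completely degenerate equilibrium of the identical Kuramoto system on `G`. -/
def IsCDE {V : Type*} [Fintype V] (G : SimpleGraph V) (θ : V → ℝ) : Prop :=
  (∀ k, ∑ j, adjInd G j k * Real.sin (θ j - θ k) = 0) ∧
  (∀ j k, G.Adj j k → Real.cos (θ j - θ k) = 0)

lemma aux_cos {V : Type*} (G : SimpleGraph V) (θ : V → ℝ) {u w : V} (q : G.Walk u w)
    (h : ∀ i : ℕ, i < q.length → Real.sin (θ (q.getVert (i+1)) - θ (q.getVert i)) = 1)
    (j k : V) (hm : s(j, k) ∈ q.edges) : Real.cos (θ j - θ k) = 0 := by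
  induction q with
  | nil => simp at hm
  | @cons u v w ha q ih =>
    have h0 := h 0 (by simp)
    have hc : Real.cos (θ v - θ u) = 0 := by
      have := Real.sin_sq_add_cos_sq (θ v - θ u)
      simp at h0
      rw [h0] at this
      nlinarith
    rw [SimpleGraph.Walk.edges_cons, List.mem_cons] at hm
    rcases hm with hm | hm
    · rw [Sym2.eq_iff] at hm
      rcases hm with ⟨rfl, rfl⟩ | ⟨rfl, rfl⟩
      · rw [← Real.cos_neg, neg_sub]; exact hc
      · exact hc
    · refine ih (fun i hi => ?_) hm
      have := h (i+1) (by simpa using hi)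
      simpa using this

lemma aux_sum {V : Type*} [Fintype V] [DecidableEq V] (G : SimpleGraph V) (θ : V → ℝ)
    {u w : V} (q : G.Walk u w)
    (h : ∀ i : ℕ, i < q.length → Real.sin (θ (q.getVert (i+1)) - θ (q.getVert i)) = 1)
    (k : V) : ∑ j, (q.edges.count s(j, k) : ℝ) * Real.sin (θ j - θ k)
      = (if u = k then 1 else 0) - (if w = k then 1 else 0) := by
  induction q with
  | nil => simp
  | @cons u v w ha q ih =>
    have h0 : Real.sin (θ v - θ u) = 1 := by simpa using h 0 (by simp)
    have h1 : Real.sin (θ u - θ v) = -1 := by rw [← neg_sub, Real.sin_neg, h0]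
    have ih' := ih (fun i hi => by
      have := h (i+1) (by simpa using hi)
      simpa using this)
    have key : ∑ j, (if s(u, v) = s(j, k) then (1 : ℝ) else 0) * Real.sin (θ j - θ k)
        = (if u = k then 1 else 0) - (if v = k then 1 else 0) := by
      have hne : u ≠ v := ha.ne
      have : ∀ j, (if s(u, v) = s(j, k) then (1 : ℝ) else 0) * Real.sin (θ j - θ k)
          = (if j = v then (if u = k then 1 else 0) else 0)
            - (if j = u then (if v = k then 1 else 0) else 0) := by
        intro j
        simp only [Sym2.eq_iff]
        grind
      simp only [this, Finset.sum_sub_distrib]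
      simp
    simp only [SimpleGraph.Walk.edges_cons, List.count_cons, beq_iff_eq, Nat.cast_add,
      Nat.cast_ite, Nat.cast_one, Nat.cast_zero, add_mul, Finset.sum_add_distrib]
    rw [ih', key]
    ring

/-- if a connected graph has an Eulerian circuit in which the number of steps
between any two visits at the same vertex is a multiple of four, then the phase assignment
increasing by `π/2` at each step (any representatives mod `2π`) is a completely degenerate
equilibrium. -/
theorem stmt7 {N : ℕ} (G : SimpleGraph (Fin N)) (hG : G.Connected)
    (v : Fin N) (p : G.Walk v v) (hp : p.IsEulerian)
    (hdiv : ∀ i j : ℕ, i ≤ p.length → j ≤ p.length →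
      p.getVert i = p.getVert j → (4 : ℤ) ∣ (i : ℤ) - (j : ℤ))
    (θ : Fin N → ℝ)
    (hθ : ∀ i : ℕ, i ≤ p.length →
      ∃ m : ℤ, θ (p.getVert i) = (i : ℝ) * (π / 2) + 2 * π * m) :
    IsCDE G θ := by
  have h : ∀ i : ℕ, i < p.length →
      Real.sin (θ (p.getVert (i+1)) - θ (p.getVert i)) = 1 := by
    intro i hi
    obtain ⟨m, hm⟩ := hθ i hi.le
    obtain ⟨n, hn⟩ := hθ (i+1) hi
    rw [hm, hn]
    have : ((i+1 : ℕ) : ℝ) * (π / 2) + 2 * π * n - (i * (π / 2) + 2 * π * m)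
        = π / 2 + ((n - m : ℤ) : ℝ) * (2 * π) := by
      push_cast; ring
    rw [this, Real.sin_add_int_mul_two_pi, Real.sin_pi_div_two]
  refine ⟨fun k => ?_, fun j k hjk => aux_cos G θ p h j k (hp.mem_edges_iff.2 hjk)⟩
  have hs := aux_sum G θ p h k
  rw [sub_self] at hs
  rw [← hs]
  refine Finset.sum_congr rfl fun j _ => ?_
  congr 1
  unfold adjInd
  split_ifs with hjk
  · rw [hp _ hjk]; simp
  · rw [List.count_eq_zero_of_not_mem (fun hm => hjk (hp.mem_edges_iff.1 hm))]; simp
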